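/- Let X ⊆ ℝⁿ be a nonempty closed convex set, f : ℝⁿ → ℝ a function, M > 0 and γ > 0, and let F(x) = f(π_X(x)) + M·‖x − π_X(x)‖^γ. If x* is a global minimizer of F over all of ℝⁿ, then x* ∈ X and x* is a global minimizer of f over X. -/

import Mathlib

section ProjectivePenalty

variable {α β : Type*} [AddZeroClass β]

/-- The projective exact penalty function of an objective `f`: a point `x` is first moved to the
feasible point `r x`, where `f` is evaluated, and is then charged the penalty `p x`. In the
classical case `r` is the metric projection `π_X` and `p x = M * ‖x - π_X x‖ ^ γ`; keeping `r` and
`p` arbitrary separates the argument from the geometry of `X`. -/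
def projectivePenalty (f : α → β) (r : α → α) (p : α → β) (x : α) : β :=
  f (r x) + p x

variable {X : Set α} {f p : α → β} {r : α → α} {x : α}

theorem projectivePenalty_eq_of_mem (hr_fix : ∀ y ∈ X, r y = y) (hp_zero : ∀ y ∈ X, p y = 0)
    (hx : x ∈ X) : projectivePenalty f r p x = f x := by
  rw [projectivePenalty, hr_fix x hx, hp_zero x hx, add_zero]

variable [Preorder β] [AddLeftStrictMono β]

theorem mem_of_projectivePenalty_le (hp_pos : ∀ y ∉ X, 0 < p y)
    (hle : projectivePenalty f r p x ≤ f (r x)) : x ∈ X := by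
  by_contra hx
  exact (lt_add_of_pos_right (f (r x)) (hp_pos x hx)).not_ge hle

-- `IsMinOn` does not require `x ∈ X`: the penalty at `x` is only compared with values on `X`.
theorem constrained_minimizer_of_projective_penalty_minimizer_general
    (hr_mem : ∀ y, r y ∈ X) (hr_fix : ∀ y ∈ X, r y = y)
    (hp_zero : ∀ y ∈ X, p y = 0) (hp_pos : ∀ y ∉ X, 0 < p y)
    (hmin : IsMinOn (projectivePenalty f r p) X x) :
    x ∈ X ∧ IsMinOn f X x := by
  have heq : ∀ y ∈ X, projectivePenalty f r p y = f y := fun _ =>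
    projectivePenalty_eq_of_mem hr_fix hp_zero
  have hx : x ∈ X := mem_of_projectivePenalty_le hp_pos <|
    (hmin (hr_mem x)).trans_eq (heq (r x) (hr_mem x))
  refine ⟨hx, fun y hy => ?_⟩
  calc
    f x = projectivePenalty f r p x := (heq x hx).symm
    _ ≤ projectivePenalty f r p y := hmin hy
    _ = f y := heq y hy

end ProjectivePenalty

section Norm

variable {E : Type*} [NormedAddCommGroup E] {x z : E}

theorem eq_of_mem_of_forall_norm_sub_le {X : Set E} (hx : x ∈ X)
    (hz : ∀ y ∈ X, ‖x - z‖ ≤ ‖x - y‖) : z = x := by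
  have hzero : ‖x - z‖ ≤ 0 := by simpa only [sub_self, norm_zero] using hz x hx
  exact (norm_sub_eq_zero_iff.mp (hzero.antisymm (norm_nonneg _))).symm

theorem mul_norm_sub_rpow_eq_zero (M : ℝ) {γ : ℝ} (hγ : γ ≠ 0) (h : x = z) :
    M * ‖x - z‖ ^ γ = 0 := by
  rw [h, sub_self, norm_zero, Real.zero_rpow hγ, mul_zero]

theorem mul_norm_sub_rpow_pos {M : ℝ} (hM : 0 < M) (γ : ℝ) (h : x ≠ z) :
    0 < M * ‖x - z‖ ^ γ :=
  mul_pos hM (Real.rpow_pos_of_pos (norm_sub_pos_iff.mpr h) γ)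

end Norm

/-- If `x*` is a global minimizer over `ℝⁿ` of the projective exact
penalty function `F x = f (π_X x) + M * ‖x - π_X x‖ ^ γ`, then `x* ∈ X` and `x*`
is a global minimizer of `f` over `X`. -/
theorem constrained_minimizer_of_projective_penalty_minimizer
    {n : ℕ} (X : Set (EuclideanSpace ℝ (Fin n)))
    (hXne : X.Nonempty) (hXcl : IsClosed X) (hXconv : Convex ℝ X)
    (f : EuclideanSpace ℝ (Fin n) → ℝ) (M γ : ℝ) (hM : 0 < M) (hγ : 0 < γ)
    (π : EuclideanSpace ℝ (Fin n) → EuclideanSpace ℝ (Fin n))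
    (hπmem : ∀ x, π x ∈ X)
    (hπmin : ∀ x, ∀ y ∈ X, ‖x - π x‖ ≤ ‖x - y‖)
    (F : EuclideanSpace ℝ (Fin n) → ℝ)
    (hF : ∀ x, F x = f (π x) + M * ‖x - π x‖ ^ γ)
    (xstar : EuclideanSpace ℝ (Fin n))
    (hmin : ∀ y, F xstar ≤ F y) :
    xstar ∈ X ∧ ∀ y ∈ X, f xstar ≤ f y := by
  have hfix : ∀ x ∈ X, π x = x := fun x hx => eq_of_mem_of_forall_norm_sub_le hx (hπmin x)
  obtain rfl : F = projectivePenalty f π fun x => M * ‖x - π x‖ ^ γ := funext hF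
  exact constrained_minimizer_of_projective_penalty_minimizer_general hπmem hfix
    (fun x hx => mul_norm_sub_rpow_eq_zero M hγ.ne' (hfix x hx).symm)
    (fun x hx => mul_norm_sub_rpow_pos hM γ (ne_of_mem_of_not_mem (hπmem x) hx).symm)
    (fun y _ => hmin y)
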